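/- Let X be a tree and let Γ₀ be a group acting on X by graph automorphisms, freely and without inversions. Let D be a set of vertices of X containing exactly one vertex of each Γ₀-orbit and inducing a connected subgraph of X, and let x₀ ∈ D. Let F = {γ ∈ Γ₀ \ {1} : some vertex of D is adjacent in X to some vertex of γ·D}, and let D₁ be the union of the sets γ·D over γ ∈ F ∪ {1}. Let σ : Γ₀ → Aut(X) be a group homomorphism such that σ(γ)·x = γ·x for every γ ∈ F and every vertex x ∈ D₁. Then: (i) σ is injective; (ii) there exists a graph automorphism f of X with f(x₀) = x₀ and f(γ·x) = σ(γ)·f(x) for every γ ∈ Γ₀ and every vertex x; (iii) consequently, d(x₀, σ(γ)·x₀) = d(x₀, γ·x₀) and λ(σ(γ)) = λ(γ) for every γ ∈ Γ₀, and the group σ(Γ₀) acts freely and without inversions on X with D containing exactly one vertex of each σ(Γ₀)-orbit. -/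

import Mathlib

open SimpleGraph

/-- The translation length of a self-map `f` of the vertex set of a graph `G`:
`λ(f) = min over vertices v of d(v, f v)`. -/
noncomputable def translationLength {V : Type*} (G : SimpleGraph V) (f : V → V) : ℕ :=
  ⨅ v : V, G.dist v (f v)

/-!
An equivariant map is determined by its values on a fundamental domain, so `σ` yields one
`σ`-equivariant map of the tree that is the identity on `D`. Agreement of the two actions across
the edges leaving `D` makes this map the identity on the neighbours of `D` too, so by equivariance
it is a bijection on the neighbours of every vertex: a covering of graphs. A connected covering of
a tree is an isomorphism, since local injectivity sends paths to walks without backtracking.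
Everything known about the original action is then transported by conjugation.
-/

section GraphMaps

variable {V W : Type*} {G : SimpleGraph V} {H : SimpleGraph W}

theorem edist_map_le (f : G →g H) (u v : V) : H.edist (f u) (f v) ≤ G.edist u v :=
  le_iInf fun p => (edist_le (p.map f)).trans_eq (by rw [Walk.length_map])

theorem dist_iso_apply (e : G ≃g H) (u v : V) : H.dist (e u) (e v) = G.dist u v := by
  refine congrArg ENat.toNat (le_antisymm (edist_map_le e.toHom u v) ?_)
  simpa using edist_map_le e.symm.toHom (e u) (e v)

theorem translationLength_eq_of_semiconj (e : G ≃g H) {f : V → V} {g : W → W}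
    (h : Function.Semiconj e f g) : translationLength H g = translationLength G f :=
  (Equiv.iInf_congr e.toEquiv fun v => (congrArg (H.dist (e v)) (h v).symm).trans
    (dist_iso_apply e v (f v))).symm

theorem isPath_map_of_injOn_neighborSet (hH : H.IsAcyclic) (f : G →g H)
    (hf : ∀ v, Set.InjOn f (G.neighborSet v)) {u v : V} {p : G.Walk u v} (hp : p.IsPath) :
    (p.map f).IsPath := by
  -- In an acyclic graph a walk is a path as soon as it never backtracks.
  rw [hH.isPath_iff_isChain]
  induction p with
  | nil => simp
  | cons hab q ih =>
    have hchain := ih hp.of_cons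
    cases q with
    | nil => simp
    | cons hbc r =>
      simp only [Walk.map_cons, Walk.edges_cons, List.isChain_cons_cons] at hchain ⊢
      refine ⟨fun hbacktrack => ?_, hchain⟩
      rw [Sym2.eq_swap, Sym2.congr_right] at hbacktrack
      obtain rfl := hf _ hab.symm hbc hbacktrack
      simp at hp

variable (G H) in
/-- `f` is a covering map of graphs: it maps the neighbours of each vertex `v` bijectively onto the
neighbours of `f v`. Surjectivity on vertices is not required. -/
def IsGraphCovering (f : V → W) : Prop :=
  ∀ v, Set.BijOn f (G.neighborSet v) (H.neighborSet (f v))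

namespace IsGraphCovering

variable {f : V → W}

theorem injective (hf : IsGraphCovering G H f) (hG : G.Preconnected) (hH : H.IsAcyclic) :
    Function.Injective f := by
  intro u v huv
  obtain ⟨p, hp⟩ := (hG u v).exists_isPath
  let φ : G →g H := ⟨f, fun {u _} h => (hf u).mapsTo h⟩
  have hclosed := isPath_map_of_injOn_neighborSet hH φ (fun w => (hf w).injOn) hp
  rw [← Walk.isPath_copy _ rfl huv.symm, Walk.isPath_iff_nil, ← Walk.length_eq_zero_iff,
    Walk.length_copy, Walk.length_map] at hclosed
  exact Walk.eq_of_length_eq_zero hclosed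

theorem surjective [Nonempty V] (hf : IsGraphCovering G H f) (hH : H.Preconnected) :
    Function.Surjective f := by
  have range_of_walk {a b : W} (p : H.Walk a b) : a ∈ Set.range f → b ∈ Set.range f := by
    induction p with
    | nil => exact id
    | cons h _ ih =>
      rintro ⟨u, rfl⟩
      obtain ⟨v, -, hv⟩ := (hf u).surjOn h
      exact ih ⟨v, hv⟩
  intro y
  obtain ⟨u⟩ := ‹Nonempty V›
  obtain ⟨p⟩ := hH (f u) y
  exact range_of_walk p ⟨u, rfl⟩

theorem exists_iso (hf : IsGraphCovering G H f) (hG : G.Connected) (hH : H.IsTree) :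
    ∃ e : G ≃g H, ⇑e = f := by
  have := hG.nonempty
  have hinj := hf.injective hG.preconnected hH.isAcyclic
  have hsurj := hf.surjective hH.connected.preconnected
  refine ⟨⟨.ofBijective f ⟨hinj, hsurj⟩, fun {u _} =>
    ⟨fun h => ?_, fun h => (hf u).mapsTo h⟩⟩, rfl⟩
  obtain ⟨w, huw, hwv⟩ := (hf u).surjOn h
  exact hinj hwv ▸ huw

end IsGraphCovering

end GraphMaps

section Transversals

/-- `D` is a strict fundamental domain for the action of `M`: it contains exactly one point of each
orbit. -/
def IsOrbitTransversal (M : Type*) {α : Type*} [Group M] [MulAction M α] (D : Set α) : Prop :=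
  ∀ x : α, ∃! w : α, w ∈ D ∧ w ∈ MulAction.orbit M x

variable {M N α β : Type*} [Group M] [MulAction M α] {D : Set α}

namespace IsOrbitTransversal

theorem exists_smul_eq (hD : IsOrbitTransversal M D) (x : α) : ∃ γ : M, ∃ w ∈ D, γ • w = x := by
  obtain ⟨w, ⟨hw, γ, rfl⟩, -⟩ := hD x
  exact ⟨γ⁻¹, γ • x, hw, inv_smul_smul γ x⟩

theorem eq_of_smul_eq_smul (hD : IsOrbitTransversal M D) {γ δ : M} {w w' : α} (hw : w ∈ D)
    (hw' : w' ∈ D) (h : γ • w = δ • w') : w = w' :=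
  (hD w).unique ⟨hw, MulAction.mem_orbit_self w⟩ ⟨hw', δ⁻¹ * γ, by simp [mul_smul, h]⟩

theorem exists_mulActionHom_eqOn [Monoid N] [MulAction N β] (hD : IsOrbitTransversal M D)
    (σ : M →* N) (i : α → β) (hstab : ∀ γ : M, ∀ w ∈ D, γ • w = w → σ γ • i w = i w) :
    ∃ φ : α →ₑ[σ] β, Set.EqOn φ i D := by
  choose g r hrD hgr using hD.exists_smul_eq
  have map_smul_mem (γ : M) {w : α} (hw : w ∈ D) :
      σ (g (γ • w)) • i (r (γ • w)) = σ γ • i w := by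
    have hr : r (γ • w) = w := hD.eq_of_smul_eq_smul (hrD _) hw (hgr _)
    have hfix : (γ⁻¹ * g (γ • w)) • w = w := by
      rw [mul_smul, inv_smul_eq_iff]
      simpa only [hr] using hgr (γ • w)
    calc σ (g (γ • w)) • i (r (γ • w))
        = σ (γ * (γ⁻¹ * g (γ • w))) • i w := by rw [mul_inv_cancel_left, hr]
      _ = σ γ • i w := by rw [map_mul, mul_smul, hstab _ w hw hfix]
  refine ⟨⟨fun x => σ (g x) • i (r x), fun γ x => ?_⟩,
    fun w hw => by simpa using! map_smul_mem 1 hw⟩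
  obtain ⟨δ, w, hw, rfl⟩ := hD.exists_smul_eq x
  rw [← mul_smul, map_smul_mem _ hw, map_smul_mem _ hw, map_mul, mul_smul]

theorem existsUnique_image (hD : IsOrbitTransversal M D) [SMul N β] {σ : M → N} {e : α → β}
    (hbij : Function.Bijective e) (he : ∀ γ x, e (γ • x) = σ γ • e x) (y : β) :
    ∃! w, w ∈ e '' D ∧ ∃ γ, σ γ • y = w := by
  obtain ⟨x, rfl⟩ := hbij.surjective y
  obtain ⟨w, ⟨hw, γ, hγ⟩, hunique⟩ := hD x
  refine ⟨e w, ⟨⟨w, hw, rfl⟩, γ, (he γ x).symm.trans (congrArg e hγ)⟩, ?_⟩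
  rintro _ ⟨⟨w', hw', rfl⟩, δ, hδ⟩
  exact congrArg e (hunique w' ⟨hw', δ, hbij.injective ((he δ x).trans hδ)⟩)

end IsOrbitTransversal

end Transversals

section EquivariantCoverings

variable {V W M N : Type*} {G : SimpleGraph V} {H : SimpleGraph W} [Group M] [MulAction M V]
  [Group N] [MulAction N W] {D : Set V} {σ : M →* N}

theorem bijOn_smul_neighborSet (hG : ∀ (γ : M) (u v : V), G.Adj u v → G.Adj (γ • u) (γ • v))
    (γ : M) (v : V) : Set.BijOn (γ • ·) (G.neighborSet v) (G.neighborSet (γ • v)) := by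
  refine ⟨hG γ v, (MulAction.injective γ).injOn, fun y hy => ⟨γ⁻¹ • y, ?_, smul_inv_smul γ y⟩⟩
  simpa using hG γ⁻¹ _ _ hy

theorem isGraphCovering_of_bijOn_neighborSet
    (hG : ∀ (γ : M) (u v : V), G.Adj u v → G.Adj (γ • u) (γ • v))
    (hH : ∀ (γ : N) (u v : W), H.Adj u v → H.Adj (γ • u) (γ • v))
    (hD : ∀ v : V, ∃ γ : M, ∃ w ∈ D, γ • w = v) (φ : V →ₑ[σ] W)
    (hφ : ∀ w ∈ D, Set.BijOn φ (G.neighborSet w) (H.neighborSet (φ w))) :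
    IsGraphCovering G H φ := by
  intro v
  obtain ⟨γ, w, hw, rfl⟩ := hD v
  have hback : Set.BijOn (γ⁻¹ • ·) (G.neighborSet (γ • w)) (G.neighborSet w) := by
    simpa only [inv_smul_smul] using bijOn_smul_neighborSet hG γ⁻¹ (γ • w)
  have hconj := (bijOn_smul_neighborSet hH (σ γ) (φ w)).comp ((hφ w hw).comp hback)
  rw [map_smulₛₗ]
  refine hconj.congr fun y _ => ?_
  simp only [Function.comp_apply, ← map_smulₛₗ, smul_inv_smul]

theorem exists_equivariant_iso (hGconn : G.Connected) (hHtree : H.IsTree)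
    (hG : ∀ (γ : M) (u v : V), G.Adj u v → G.Adj (γ • u) (γ • v))
    (hH : ∀ (γ : N) (u v : W), H.Adj u v → H.Adj (γ • u) (γ • v))
    (hD : IsOrbitTransversal M D) (i : V → W)
    (hi : ∀ w ∈ D, Set.BijOn i (G.neighborSet w) (H.neighborSet (i w)))
    (hstab : ∀ γ : M, ∀ w ∈ D, γ • w = w → σ γ • i w = i w)
    (hadj : ∀ γ : M, ∀ u ∈ D, ∀ w ∈ D, G.Adj u (γ • w) → σ γ • i w = i (γ • w)) :
    ∃ e : G ≃g H, Set.EqOn e i D ∧ ∀ (γ : M) (x : V), e (γ • x) = σ γ • e x := by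
  obtain ⟨φ, hφD⟩ := hD.exists_mulActionHom_eqOn σ i hstab
  have hφ_neighbor {u : V} (hu : u ∈ D) : Set.EqOn φ i (G.neighborSet u) := by
    intro y hy
    obtain ⟨γ, w, hw, rfl⟩ := hD.exists_smul_eq y
    rw [map_smulₛₗ, hφD hw, hadj γ u hu w hw hy]
  have hcovering : IsGraphCovering G H φ :=
    isGraphCovering_of_bijOn_neighborSet hG hH hD.exists_smul_eq φ fun w hw =>
      hφD hw ▸ (hi w hw).congr (hφ_neighbor hw).symm
  obtain ⟨e, he⟩ := hcovering.exists_iso hGconn hHtree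
  exact ⟨e, he ▸ hφD, fun γ x => he ▸ map_smulₛₗ φ γ x⟩

end EquivariantCoverings

theorem stmt_8_general {V : Type*} (G : SimpleGraph V) (hG : G.IsTree)
    {Γ : Type*} [Group Γ] [MulAction Γ V]
    (hact : ∀ (γ : Γ) (u v : V), G.Adj u v → G.Adj (γ • u) (γ • v))
    (hfree : ∀ γ : Γ, γ ≠ 1 → ∀ v : V, γ • v ≠ v)
    (hninv : ∀ γ : Γ, γ ≠ 1 → ∀ u v : V, G.Adj u v → ¬(γ • u = v ∧ γ • v = u))
    (D : Set V) (hD : IsOrbitTransversal Γ D) (x₀ : V) (hx₀ : x₀ ∈ D)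
    (σ : Γ →* (G ≃g G))
    (hσ : ∀ γ : Γ, γ ≠ 1 → ∀ u ∈ D, ∀ w ∈ D, G.Adj u (γ • w) → σ γ w = γ • w) :
    Function.Injective σ ∧
    (∃ f : G ≃g G, f x₀ = x₀ ∧ ∀ (γ : Γ) (x : V), f (γ • x) = σ γ (f x)) ∧
    (∀ γ : Γ, G.dist x₀ (σ γ x₀) = G.dist x₀ (γ • x₀) ∧
      translationLength G (σ γ) = translationLength G (fun v => γ • v)) ∧
    (∀ γ : Γ, γ ≠ 1 →
      (∀ v : V, σ γ v ≠ v) ∧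
      (∀ u v : V, G.Adj u v → ¬(σ γ u = v ∧ σ γ v = u))) ∧
    (∀ v : V, ∃! w : V, w ∈ D ∧ ∃ γ : Γ, σ γ v = w) := by
  obtain ⟨f, hfD, hf⟩ : ∃ f : G ≃g G, Set.EqOn f id D ∧ ∀ γ x, f (γ • x) = σ γ (f x) := by
    refine exists_equivariant_iso (σ := σ) hG.connected hG hact
      (fun e _ _ => e.map_adj_iff.mpr) hD id (fun w _ => Set.bijOn_id _)
      (fun γ w _ hγ => ?_) fun γ u hu w hw huw => ?_
    · obtain rfl : γ = 1 := by_contra fun hne => hfree γ hne w hγ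
      simp
    · obtain rfl | hne := eq_or_ne γ 1
      · simp
      · exact hσ γ hne u hu w hw huw
  have hσfree (γ : Γ) (hγ : γ ≠ 1) : ∀ v, σ γ v ≠ v :=
    f.surjective.forall.mpr fun x h => hfree γ hγ x (f.injective ((hf γ x).trans h))
  refine ⟨(injective_iff_map_eq_one σ).mpr fun γ h => by_contra fun hne =>
      hσfree γ hne x₀ (DFunLike.congr_fun h x₀),
    ⟨f, hfD hx₀, hf⟩,
    fun γ => ⟨?_, translationLength_eq_of_semiconj f (hf γ)⟩,
    fun γ hγ => ⟨hσfree γ hγ, f.surjective.forall₂.mpr fun x y hxy h => ?_⟩, ?_⟩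
  · simpa only [hf, hfD hx₀, id] using dist_iso_apply f x₀ (γ • x₀)
  · simp only [← hf, f.injective.eq_iff] at h
    exact hninv γ hγ x y (f.map_adj_iff.mp hxy) h
  · simpa only [hfD.image_eq, Set.image_id, RelIso.smul_def] using
      hD.existsUnique_image (σ := σ) f.bijective hf

/-- **Lemme 5.2** (unit edge-length form): a deformation `σ : Γ → Aut(X)` of a free
action without inversions of `Γ` on a tree `X` which agrees with the original action on
a neighbourhood `D₁` of a connected fundamental domain `D` is injective, is implemented
by a `σ`-equivariant automorphism of `X` fixing `x₀`, and hence preserves displacements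
and translation lengths, and `σ(Γ)` again acts freely and without inversions with `D` as
fundamental domain. -/
theorem stmt_8 {V : Type*} (G : SimpleGraph V) (hG : G.IsTree)
    {Γ : Type*} [Group Γ] [MulAction Γ V]
    (hact : ∀ (γ : Γ) (u v : V), G.Adj u v → G.Adj (γ • u) (γ • v))
    (hfree : ∀ γ : Γ, γ ≠ 1 → ∀ v : V, γ • v ≠ v)
    (hninv : ∀ γ : Γ, γ ≠ 1 → ∀ u v : V, G.Adj u v → ¬(γ • u = v ∧ γ • v = u))
    (D : Set V)
    (hDorb : ∀ v : V, ∃! w : V, w ∈ D ∧ w ∈ MulAction.orbit Γ v)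
    (hDconn : (G.induce D).Connected)
    (x₀ : V) (hx₀ : x₀ ∈ D)
    (F : Set Γ)
    (hF : F = {γ : Γ | γ ≠ 1 ∧ ∃ u ∈ D, ∃ w ∈ D, G.Adj u (γ • w)})
    (D₁ : Set V)
    (hD₁ : D₁ = {x : V | ∃ γ : Γ, (γ ∈ F ∨ γ = 1) ∧ ∃ w ∈ D, x = γ • w})
    (σ : Γ →* (G ≃g G))
    (hσ : ∀ γ ∈ F, ∀ x ∈ D₁, σ γ x = γ • x) :
    Function.Injective σ ∧
    (∃ f : G ≃g G, f x₀ = x₀ ∧ ∀ (γ : Γ) (x : V), f (γ • x) = σ γ (f x)) ∧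
    (∀ γ : Γ, G.dist x₀ (σ γ x₀) = G.dist x₀ (γ • x₀) ∧
      translationLength G (σ γ) = translationLength G (fun v => γ • v)) ∧
    (∀ γ : Γ, γ ≠ 1 →
      (∀ v : V, σ γ v ≠ v) ∧
      (∀ u v : V, G.Adj u v → ¬(σ γ u = v ∧ σ γ v = u))) ∧
    (∀ v : V, ∃! w : V, w ∈ D ∧ ∃ γ : Γ, σ γ v = w) :=
  stmt_8_general G hG hact hfree hninv D hDorb x₀ hx₀ σ fun γ hγ u hu w hw huw =>
    hσ γ (hF ▸ ⟨hγ, u, hu, w, hw, huw⟩) w (hD₁ ▸ ⟨1, .inr rfl, w, hw, (one_smul Γ w).symm⟩)
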